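/- Let G be a group and let a_1, a_2, a_3, b_1, b_2, b_3, b be elements of G. Assume: (i) a_1, a_2, a_3 pairwise commute; (ii) for each i taken modulo 3, b a_i b_i = a_i b_i a_{i+1} = b_i a_{i+1} b = a_{i+1} b a_i; and (iii) the product z = a_1³ b_1 a_2³ b_2 a_3³ b_3 is central in G. Then the 12-tuple (a_1, a_1, a_1, b_1, a_2, a_2, a_2, b_2, a_3, a_3, a_3, b_3) is Hurwitz equivalent to the 12-tuple (a_1, a_2, a_3, b, a_1, a_2, a_3, b, a_1, a_2, a_3, b); in particular a_1³ b_1 a_2³ b_2 a_3³ b_3 = (a_1 a_2 a_3 b)³ in G. -/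

import Mathlib

/-- An elementary Hurwitz move on a tuple of elements of a group: replace an adjacent
pair `(a, b)` by `(a * b * a⁻¹, a)` or by `(b, b⁻¹ * a * b)`. -/
inductive HurwitzMove {G : Type*} [Group G] : List G → List G → Prop
  | slideLeft (l₁ l₂ : List G) (a b : G) :
      HurwitzMove (l₁ ++ a :: b :: l₂) (l₁ ++ (a * b * a⁻¹) :: a :: l₂)
  | slideRight (l₁ l₂ : List G) (a b : G) :
      HurwitzMove (l₁ ++ a :: b :: l₂) (l₁ ++ b :: (b⁻¹ * a * b) :: l₂)

/-- Two tuples are Hurwitz equivalent if one is obtained from the other by a finite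
sequence of elementary Hurwitz moves. -/
def HurwitzEquiv {G : Type*} [Group G] : List G → List G → Prop :=
  Relation.ReflTransGen HurwitzMove

namespace HurwitzEquiv

variable {G : Type*} [Group G]

theorem refl (l : List G) : HurwitzEquiv l l :=
  Relation.ReflTransGen.refl

theorem trans {l₁ l₂ l₃ : List G} (h : HurwitzEquiv l₁ l₂) (h' : HurwitzEquiv l₂ l₃) :
    HurwitzEquiv l₁ l₃ :=
  Relation.ReflTransGen.trans h h'

/-- Hurwitz equivalence of a block of consecutive entries extends to the whole tuple. -/
theorem append_append (p s : List G) {l l' : List G} (h : HurwitzEquiv l l') :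
    HurwitzEquiv (p ++ l ++ s) (p ++ l' ++ s) := by
  refine Relation.ReflTransGen.lift (fun t ↦ p ++ t ++ s) ?_ _ _ h
  rintro _ _ (⟨l₁, l₂, a, b⟩ | ⟨l₁, l₂, a, b⟩)
  · simpa [Function.onFun] using HurwitzMove.slideLeft (p ++ l₁) (l₂ ++ s) a b
  · simpa [Function.onFun] using HurwitzMove.slideRight (p ++ l₁) (l₂ ++ s) a b

theorem cons (x : G) {l l' : List G} (h : HurwitzEquiv l l') :
    HurwitzEquiv (x :: l) (x :: l') := by
  simpa using h.append_append [x] []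

/-- Hurwitz equivalent tuples have the same product. -/
theorem prod_eq {l l' : List G} (h : HurwitzEquiv l l') : l.prod = l'.prod := by
  induction h with
  | refl => rfl
  | tail _ hmove ih =>
    rw [ih]
    cases hmove <;> simp [mul_assoc]

theorem pair_swap {x y : G} (h : Commute x y) : HurwitzEquiv [x, y] [y, x] := by
  have hmove := HurwitzMove.slideLeft [] [] x y
  rw [h.eq, mul_inv_cancel_right] at hmove
  exact .single hmove

/-- If `x` and `y` commute and `x c y = y b x`, then `(x, c, y)` and `(y, b, x)` are Hurwitz
equivalent. -/
theorem triple {x y b c : G} (hxy : Commute x y) (h : x * c * y = y * b * x) :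
    HurwitzEquiv [x, c, y] [y, b, x] := by
  have hconj : x * c * x⁻¹ = y * b * y⁻¹ := by
    rw [mul_inv_eq_iff_eq_mul, eq_mul_inv_of_mul_eq h, mul_assoc _ x, mul_assoc _ y⁻¹,
      hxy.inv_right.eq]
  have hleft := HurwitzMove.slideLeft [] [y] x c
  have hright := HurwitzMove.slideRight [] [x] (y * b * y⁻¹) y
  rw [hconj] at hleft
  rw [show y⁻¹ * (y * b * y⁻¹) * y = b by group] at hright
  exact trans (.single hleft) (trans ((pair_swap hxy).cons _) (.single hright))

/-- The last entry can be moved to the front, at the cost of a conjugation. -/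
theorem concat_conj (l : List G) (x : G) :
    HurwitzEquiv (l ++ [x]) ((l.prod * x * l.prod⁻¹) :: l) := by
  induction l with
  | nil => simpa using refl [x]
  | cons y l ih =>
    refine trans (ih.cons y) (.single ?_)
    simpa [mul_assoc] using HurwitzMove.slideLeft [] l y (l.prod * x * l.prod⁻¹)

/-- The first entry can be moved to the end, at the cost of a conjugation. -/
theorem cons_conj (l : List G) (x : G) :
    HurwitzEquiv (x :: l) (l ++ [l.prod⁻¹ * x * l.prod]) := by
  induction l generalizing x with
  | nil => simpa using refl [x]
  | cons y l ih =>
    refine trans (.single (HurwitzMove.slideRight [] l x y)) ?_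
    simpa [mul_assoc] using (ih (y⁻¹ * x * y)).cons y

/-- The first entry of a tuple with central product can be moved to the end. -/
theorem rotate_left {l : List G} {x : G} (h : (x :: l).prod ∈ Subgroup.center G) :
    HurwitzEquiv (x :: l) (l ++ [x]) := by
  have hx := Subgroup.mem_center_iff.mp h x
  rw [List.prod_cons, mul_assoc, mul_left_cancel_iff] at hx
  have hconj := cons_conj l x
  rwa [mul_assoc, hx, inv_mul_cancel_left] at hconj

/-- The last entry of a tuple with central product can be moved to the front. -/
theorem rotate_right {l : List G} {x : G} (h : (l ++ [x]).prod ∈ Subgroup.center G) :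
    HurwitzEquiv (l ++ [x]) (x :: l) := by
  have hx := Subgroup.mem_center_iff.mp h x
  rw [List.prod_append, List.prod_singleton, ← mul_assoc, mul_right_cancel_iff] at hx
  have hconj := concat_conj l x
  rwa [← hx, mul_inv_cancel_right] at hconj

end HurwitzEquiv

/-- The algebraic content of the identification of the 3-holed torus relation
`N₃ = ∂₃` with the star relation `(a₁ a₂ a₃ b)³ = ∂₃`. -/
theorem hurwitzEquiv_star_relation {G : Type*} [Group G]
    (a₁ a₂ a₃ b₁ b₂ b₃ b : G)
    (hc12 : Commute a₁ a₂) (hc13 : Commute a₁ a₃) (hc23 : Commute a₂ a₃)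
    (h1 : b * a₁ * b₁ = a₁ * b₁ * a₂ ∧ a₁ * b₁ * a₂ = b₁ * a₂ * b ∧
      b₁ * a₂ * b = a₂ * b * a₁)
    (h2 : b * a₂ * b₂ = a₂ * b₂ * a₃ ∧ a₂ * b₂ * a₃ = b₂ * a₃ * b ∧
      b₂ * a₃ * b = a₃ * b * a₂)
    (h3 : b * a₃ * b₃ = a₃ * b₃ * a₁ ∧ a₃ * b₃ * a₁ = b₃ * a₁ * b ∧
      b₃ * a₁ * b = a₁ * b * a₃)
    (hz : a₁ ^ 3 * b₁ * a₂ ^ 3 * b₂ * a₃ ^ 3 * b₃ ∈ Subgroup.center G) :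
    HurwitzEquiv
      [a₁, a₁, a₁, b₁, a₂, a₂, a₂, b₂, a₃, a₃, a₃, b₃]
      [a₁, a₂, a₃, b, a₁, a₂, a₃, b, a₁, a₂, a₃, b] ∧
    a₁ ^ 3 * b₁ * a₂ ^ 3 * b₂ * a₃ ^ 3 * b₃ = (a₁ * a₂ * a₃ * b) ^ 3 := by
  have hz' : [a₁, a₁, a₁, b₁, a₂, a₂, a₂, b₂, a₃, a₃, a₃, b₃].prod ∈ Subgroup.center G := by
    simpa [pow_succ, mul_assoc] using hz
  have replaceTriples : HurwitzEquiv
      [a₁, a₁, a₁, b₁, a₂, a₂, a₂, b₂, a₃, a₃, a₃, b₃]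
      [a₁, a₁, a₂, b, a₁, a₂, a₃, b, a₂, a₃, a₃, b₃] :=
    .trans
      ((HurwitzEquiv.triple hc12 (h1.2.1.trans h1.2.2)).append_append
        [a₁, a₁] [a₂, a₂, b₂, a₃, a₃, a₃, b₃])
      ((HurwitzEquiv.triple hc23 (h2.2.1.trans h2.2.2)).append_append
        [a₁, a₁, a₂, b, a₁, a₂] [a₃, a₃, b₃])
  have rotateFirst : HurwitzEquiv
      [a₁, a₁, a₁, b₁, a₂, a₂, a₂, b₂, a₃, a₃, a₃, b₃]
      [a₁, a₂, b, a₁, a₂, a₃, b, a₂, a₃, a₃, b₃, a₁] :=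
    replaceTriples.trans (.rotate_left (replaceTriples.prod_eq ▸ hz'))
  have replaceLast : HurwitzEquiv
      [a₁, a₁, a₁, b₁, a₂, a₂, a₂, b₂, a₃, a₃, a₃, b₃]
      [a₁, a₂, b, a₁, a₂, a₃, b, a₂, a₃, a₁, b, a₃] :=
    rotateFirst.trans ((HurwitzEquiv.triple hc13.symm (h3.2.1.trans h3.2.2)).append_append
      [a₁, a₂, b, a₁, a₂, a₃, b, a₂, a₃] [])
  have rotateLast : HurwitzEquiv
      [a₁, a₁, a₁, b₁, a₂, a₂, a₂, b₂, a₃, a₃, a₃, b₃]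
      [a₃, a₁, a₂, b, a₁, a₂, a₃, b, a₂, a₃, a₁, b] :=
    replaceLast.trans (.rotate_right (l := [a₁, a₂, b, a₁, a₂, a₃, b, a₂, a₃, a₁, b])
      (replaceLast.prod_eq ▸ hz'))
  have key : HurwitzEquiv
      [a₁, a₁, a₁, b₁, a₂, a₂, a₂, b₂, a₃, a₃, a₃, b₃]
      [a₁, a₂, a₃, b, a₁, a₂, a₃, b, a₁, a₂, a₃, b] := by
    refine rotateLast.trans ?_
    refine .trans ((HurwitzEquiv.pair_swap hc13.symm).append_append
      [] [a₂, b, a₁, a₂, a₃, b, a₂, a₃, a₁, b]) ?_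
    refine .trans ((HurwitzEquiv.pair_swap hc23.symm).append_append
      [a₁] [b, a₁, a₂, a₃, b, a₂, a₃, a₁, b]) ?_
    refine .trans ((HurwitzEquiv.pair_swap hc13.symm).append_append
      [a₁, a₂, a₃, b, a₁, a₂, a₃, b, a₂] [b]) ?_
    exact (HurwitzEquiv.pair_swap hc12.symm).append_append
      [a₁, a₂, a₃, b, a₁, a₂, a₃, b] [a₃, b]
  refine ⟨key, ?_⟩
  simpa [pow_succ, mul_assoc] using key.prod_eq
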